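/- Let p ≥ 3 be a prime and X a circulant scheme on a cyclic group G of order p^n, and let 𝔖 = U/L ∈ 𝔖₀(X). If the circulant scheme X_𝔖 is a nontrivial wreath product, then X is a nontrivial wreath product. -/

import Mathlib

open Set

universe u

/-- A coherent configuration on a finite set `Ω`: a partition `S` of `Ω × Ω`
satisfying (C1) the diagonal is a union of classes, (C2) closure under converse,
(C3) well-defined intersection numbers. -/
structure CohCfg (Ω : Type u) : Type u where
  S : Set (Set (Ω × Ω))
  finite : Finite Ω
  cover : ∀ p : Ω × Ω, ∃ s ∈ S, p ∈ s
  disj : ∀ s ∈ S, ∀ t ∈ S, s ≠ t → s ∩ t = ∅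
  nonemp : ∀ s ∈ S, s.Nonempty
  diag : ∀ s ∈ S, (∃ p ∈ s, p.1 = p.2) → ∀ p ∈ s, p.1 = p.2
  conv : ∀ s ∈ S, {p : Ω × Ω | (p.2, p.1) ∈ s} ∈ S
  inum : ∀ r ∈ S, ∀ s ∈ S, ∀ t ∈ S, ∀ p ∈ t, ∀ q ∈ t,
    {γ : Ω | (p.1, γ) ∈ r ∧ (γ, p.2) ∈ s}.ncard =
    {γ : Ω | (q.1, γ) ∈ r ∧ (γ, q.2) ∈ s}.ncard

namespace CohCfg

variable {Ω Ω' : Type u}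

/-- The intersection number `c^t_{rs}` computed at the pair `p`. -/
noncomputable def cnum (r s : Set (Ω × Ω)) (p : Ω × Ω) : ℕ :=
  {γ : Ω | (p.1, γ) ∈ r ∧ (γ, p.2) ∈ s}.ncard

/-- `X` is a scheme (homogeneous) if the full diagonal is a basis relation. -/
def IsScheme (X : CohCfg Ω) : Prop := {p : Ω × Ω | p.1 = p.2} ∈ X.S

/-- Commutativity: `c^t_{rs} = c^t_{sr}`. -/
def IsCommutative (X : CohCfg Ω) : Prop :=
  ∀ r ∈ X.S, ∀ s ∈ X.S, ∀ p : Ω × Ω, cnum r s p = cnum s r p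

/-- `s` is a relation of `X`, i.e. a union of basis relations. -/
def IsRelationOf (X : CohCfg Ω) (s : Set (Ω × Ω)) : Prop :=
  ∀ t ∈ X.S, (t ∩ s).Nonempty → t ⊆ s

/-- `X ≤ Y`: every (basis) relation of `X` is a relation of `Y`. -/
def le (X Y : CohCfg Ω) : Prop := ∀ s ∈ X.S, IsRelationOf Y s

/-- The diagonal relation `1_Δ` of a subset `Δ`. -/
def diagRel (Δ : Set Ω) : Set (Ω × Ω) := {p | p.1 = p.2 ∧ p.1 ∈ Δ}

/-- `Δ` is a fiber of `X`. -/
def IsFiber (X : CohCfg Ω) (Δ : Set Ω) : Prop := diagRel Δ ∈ X.S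

/-- `αs = {β | (α,β) ∈ s}`. -/
def pointSet (s : Set (Ω × Ω)) (α : Ω) : Set Ω := {β | (α, β) ∈ s}

/-- `X` is partly regular: some point `α` has `|αs| ≤ 1` for all basis relations. -/
def PartlyRegular (X : CohCfg Ω) : Prop :=
  ∃ α : Ω, ∀ s ∈ X.S, (pointSet s α).ncard ≤ 1

/-- The image `s^f` of a relation under a map of points. -/
def relImage (f : Ω → Ω') (s : Set (Ω × Ω)) : Set (Ω' × Ω') :=
  (fun p : Ω × Ω => (f p.1, f p.2)) '' s

/-- `φ` is an algebraic isomorphism from `X` to `X'`. -/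
structure IsAlgIso (X : CohCfg Ω) (X' : CohCfg Ω')
    (φ : Set (Ω × Ω) → Set (Ω' × Ω')) : Prop where
  bijOn : Set.BijOn φ X.S X'.S
  cnum_eq : ∀ r ∈ X.S, ∀ s ∈ X.S, ∀ t ∈ X.S, ∀ p ∈ t, ∀ q ∈ φ t,
    cnum r s p = cnum (φ r) (φ s) q

/-- The natural extension of an algebraic isomorphism to unions of basis relations. -/
def algImage (X : CohCfg Ω) (φ : Set (Ω × Ω) → Set (Ω' × Ω')) (s : Set (Ω × Ω)) :
    Set (Ω' × Ω') := ⋃₀ (φ '' {t | t ∈ X.S ∧ t ⊆ s})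

/-- The image `Δ^φ` of a fiber under an algebraic isomorphism. -/
def fiberImage (X : CohCfg Ω) (φ : Set (Ω × Ω) → Set (Ω' × Ω')) (Δ : Set Ω) : Set Ω' :=
  {α' | (α', α') ∈ φ (diagRel Δ)}

/-- `Y` is the point extension `X_α`: the smallest coherent configuration `≥ X`
having `1_α` as a basis relation. -/
def IsPointExt (X : CohCfg Ω) (α : Ω) (Y : CohCfg Ω) : Prop :=
  le X Y ∧ ({(α, α)} : Set (Ω × Ω)) ∈ Y.S ∧
    ∀ Z : CohCfg Ω, le X Z → ({(α, α)} : Set (Ω × Ω)) ∈ Z.S → le Y Z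

/-- `φ` has an `(α,α')`-extension: an algebraic isomorphism `X_α → X'_{α'}`
extending `φ` and sending `1_α` to `1_{α'}`. -/
def HasExtension (X : CohCfg Ω) (X' : CohCfg Ω') (φ : Set (Ω × Ω) → Set (Ω' × Ω'))
    (α : Ω) (α' : Ω') : Prop :=
  ∃ (Y : CohCfg Ω) (Y' : CohCfg Ω') (ψ : Set (Ω × Ω) → Set (Ω' × Ω')),
    IsPointExt X α Y ∧ IsPointExt X' α' Y' ∧ IsAlgIso Y Y' ψ ∧
    (∀ s ∈ X.S, algImage Y ψ s = φ s) ∧ ψ {(α, α)} = {(α', α')}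

/-- A sesquiclosed algebraic isomorphism: has an `(α,α')`-extension for all
`α ∈ Δ ∈ F(X)` and `α' ∈ Δ^φ`. -/
def SesquiclosedIso (X : CohCfg Ω) (X' : CohCfg Ω')
    (φ : Set (Ω × Ω) → Set (Ω' × Ω')) : Prop :=
  IsAlgIso X X' φ ∧
  ∀ Δ : Set Ω, IsFiber X Δ → ∀ α ∈ Δ, ∀ α' ∈ fiberImage X φ Δ, HasExtension X X' φ α α'

/-- `φ` is induced by the combinatorial isomorphism `f`. -/
def InducedBy (X : CohCfg Ω) (X' : CohCfg Ω') (φ : Set (Ω × Ω) → Set (Ω' × Ω'))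
    (f : Ω → Ω') : Prop :=
  Function.Bijective f ∧ ∀ s ∈ X.S, φ s = relImage f s

/-- `X` is separable: every algebraic isomorphism from `X` is induced by an isomorphism. -/
def Separable (X : CohCfg Ω) : Prop :=
  ∀ (Ω'' : Type u) (X' : CohCfg Ω'') (φ : Set (Ω × Ω) → Set (Ω'' × Ω'')),
    IsAlgIso X X' φ → ∃ f : Ω → Ω'', InducedBy X X' φ f

/-- `X` is sesquiseparable: every sesquiclosed algebraic isomorphism from `X`
is induced by an isomorphism. -/
def Sesquiseparable (X : CohCfg Ω) : Prop :=
  ∀ (Ω'' : Type u) (X' : CohCfg Ω'') (φ : Set (Ω × Ω) → Set (Ω'' × Ω'')),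
    SesquiclosedIso X X' φ → ∃ f : Ω → Ω'', InducedBy X X' φ f

/-- A sesquiclosed coherent configuration: (S1) the fibers of every one-point
extension `X_α` are the nonempty sets `αs`, and (S2) the identity algebraic
automorphism is sesquiclosed. -/
def SesquiclosedCfg (X : CohCfg Ω) : Prop :=
  (∀ α : Ω, ∀ Y : CohCfg Ω, IsPointExt X α Y →
     ∀ Δ : Set Ω, (IsFiber Y Δ ↔ ∃ s ∈ X.S, Δ = pointSet s α ∧ Δ.Nonempty)) ∧
  SesquiclosedIso X X id

/-- A parabolic of `X`: a relation that is an equivalence relation on `Ω`. -/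
def IsParabolic (X : CohCfg Ω) (e : Set (Ω × Ω)) : Prop :=
  IsRelationOf X e ∧ (∀ a : Ω, (a, a) ∈ e) ∧ (∀ p ∈ e, (p.2, p.1) ∈ e) ∧
    ∀ a b c : Ω, (a, b) ∈ e → (b, c) ∈ e → (a, c) ∈ e

/-- The class of `a` modulo the equivalence relation `e`. -/
def eClass (e : Set (Ω × Ω)) (a : Ω) : Set Ω := {b | (a, b) ∈ e}

/-- `Δ/e` is a section of `X`: `e` is a parabolic and `Δ` is a class of a
parabolic containing `e`. -/
def IsSection (X : CohCfg Ω) (Δ : Set Ω) (e : Set (Ω × Ω)) : Prop :=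
  IsParabolic X e ∧ ∃ d : Set (Ω × Ω), IsParabolic X d ∧ e ⊆ d ∧ ∃ a : Ω, Δ = eClass d a

/-- The point set of the section `Δ/e`: the `e`-classes of points of `Δ`. -/
abbrev Sec (Δ : Set Ω) (e : Set (Ω × Ω)) : Type u :=
  {Γ : Set Ω // ∃ a ∈ Δ, Γ = eClass e a}

/-- The relation `s_𝔖` on the section `𝔖 = Δ/e`. -/
def secRel (Δ : Set Ω) (e : Set (Ω × Ω)) (s : Set (Ω × Ω)) :
    Set (Sec Δ e × Sec Δ e) :=
  {p | ∃ a ∈ p.1.1, ∃ b ∈ p.2.1, (a, b) ∈ s}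

/-- `Y` is the coherent configuration `X_𝔖` on the section `𝔖 = Δ/e`. -/
def IsSectionCfg (X : CohCfg Ω) (Δ : Set Ω) (e : Set (Ω × Ω))
    (Y : CohCfg (Sec Δ e)) : Prop :=
  Y.S = {t | ∃ s ∈ X.S, t = secRel Δ e s ∧ t.Nonempty}

/-- The restriction `s_Δ` of a relation to a subset `Δ`. -/
def restRel (Δ : Set Ω) (s : Set (Ω × Ω)) : Set (↥Δ × ↥Δ) := {p | (p.1.1, p.2.1) ∈ s}

/-- `Y` is the restriction `X_Δ` of `X` to `Δ`. -/
def IsRestrictionCfg (X : CohCfg Ω) (Δ : Set Ω) (Y : CohCfg ↥Δ) : Prop :=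
  Y.S = {t | ∃ s ∈ X.S, t = restRel Δ s ∧ t.Nonempty}

/-- `Iso(X, X', φ)`: isomorphisms inducing the algebraic isomorphism `φ`. -/
def IsoSet (X : CohCfg Ω) (X' : CohCfg Ω') (φ : Set (Ω × Ω) → Set (Ω' × Ω')) :
    Set (Ω → Ω') :=
  {f | Function.Bijective f ∧ ∀ s ∈ X.S, relImage f s = φ s}

/-- `X` is schurian: its basis relations are the orbits of `Aut(X)` on `Ω × Ω`. -/
def Schurian (X : CohCfg Ω) : Prop :=
  ∀ s ∈ X.S, ∀ p ∈ s, ∀ q ∈ s, ∃ f : Ω → Ω,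
    (Function.Bijective f ∧ ∀ t ∈ X.S, relImage f t = t) ∧ (f p.1, f p.2) = q

/-- `e ⊆ rad(s)`: `s` is a union of products of pairs of `e`-classes it meets. -/
def RadGE (e s : Set (Ω × Ω)) : Prop :=
  ∀ p ∈ s, ∀ a b : Ω, (p.1, a) ∈ e → (p.2, b) ∈ e → (a, b) ∈ s

/-- The `e₁/e₀`-condition: every basis relation disjoint from `e₁` has `e₀` in
its radical. -/
def WedgeCond (X : CohCfg Ω) (e0 e1 : Set (Ω × Ω)) : Prop :=
  ∀ s ∈ X.S, s ∩ e1 = ∅ → RadGE e0 s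

/-- A circulant coherent configuration on a group `G`: right translations are
automorphisms. -/
def IsCirculant {G : Type u} [Group G] (X : CohCfg G) : Prop :=
  ∀ g : G, ∀ s ∈ X.S, relImage (fun x => x * g) s = s

/-- The equivalence relation `e(H)` whose classes are the cosets of `H`. -/
def eRelSet {G : Type u} [Group G] (H : Subgroup G) : Set (G × G) :=
  {p | p.1⁻¹ * p.2 ∈ H}

/-- `H` is an `X`-group. -/
def IsXGroup {G : Type u} [Group G] (X : CohCfg G) (H : Subgroup G) : Prop :=
  IsParabolic X (eRelSet H)

/-- A normal circulant scheme: every automorphism fixing the identity is a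
group automorphism. -/
def IsNormalCirc {G : Type u} [Group G] (X : CohCfg G) : Prop :=
  ∀ f : G → G, Function.Bijective f → (∀ s ∈ X.S, relImage f s = s) → f 1 = 1 →
    ∀ a b : G, f (a * b) = f a * f b

/-- Normality of a circulant scheme presented on a section `Δ/e` of a group `G`
(the points are cosets): every automorphism fixing the class of `1` respects the
coset multiplication. -/
def IsNormalSec {G : Type u} [Group G] (Δ : Set G) (e : Set (G × G))
    (Y : CohCfg (Sec Δ e)) : Prop :=
  ∀ F : Sec Δ e → Sec Δ e, Function.Bijective F → (∀ t ∈ Y.S, relImage F t = t) →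
    (∀ Γ : Sec Δ e, (1 : G) ∈ Γ.1 → F Γ = Γ) →
    ∀ Γ Γ' Γ'' : Sec Δ e, Γ''.1 = Set.image2 (· * ·) Γ.1 Γ'.1 →
      (F Γ'').1 = Set.image2 (· * ·) (F Γ).1 (F Γ').1

/-- Normality of a circulant scheme presented on (the subtype of) a subgroup `U ⊆ G`. -/
def IsNormalRest {G : Type u} [Group G] (U : Set G) (Y : CohCfg ↥U) : Prop :=
  ∀ F : ↥U → ↥U, Function.Bijective F → (∀ t ∈ Y.S, relImage F t = t) →
    (∀ x : ↥U, x.1 = 1 → F x = x) →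
    ∀ x y z : ↥U, z.1 = x.1 * y.1 → (F z).1 = (F x).1 * (F y).1

/-- `N` is an `X_U`-group: `N ≤ U` and the restriction of `e(N)` to `U` is a
relation of the restriction `X_U`. -/
def SubXGroup {G : Type u} [Group G] (X : CohCfg G) (U N : Subgroup G) : Prop :=
  N ≤ U ∧ ∀ s ∈ X.S, (∃ p ∈ s, p.1 ∈ U ∧ p.2 ∈ U ∧ p.1⁻¹ * p.2 ∈ N) →
    ∀ p ∈ s, p.1 ∈ U → p.2 ∈ U → p.1⁻¹ * p.2 ∈ N

end CohCfg

namespace CircAux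

section grp
variable {G : Type*} [CommGroup G] [Finite G] {p : ℕ} [hpf : Fact p.Prime]

theorem cop_inv (hG : IsPGroup p G) {a : ℕ} (ha : a.Coprime p) :
    ∃ b : ℕ, b.Coprime p ∧ ∀ y : G, (y ^ a) ^ b = y := by
  obtain ⟨N, hN⟩ := IsPGroup.iff_card.1 hG
  have hc : a.Coprime (Nat.card G) := by rw [hN]; exact Nat.Coprime.pow_right N ha
  have hpos : 0 < Nat.totient (Nat.card G) := Nat.totient_pos.2 Nat.card_pos
  refine ⟨a ^ (Nat.totient (Nat.card G) - 1), Nat.Coprime.pow_left _ ha, fun y => ?_⟩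
  have h := Nat.ModEq.pow_totient hc
  have hdvd : orderOf y ∣ Nat.card G := orderOf_dvd_natCard y
  rw [← pow_mul, ← pow_succ', Nat.sub_add_cancel hpos]
  have := (pow_eq_pow_iff_modEq (x := y)).2 (h.of_dvd hdvd)
  simpa using this

theorem mem_zp_iff (x y : G) : y ∈ Subgroup.zpowers x ↔ ∃ a : ℕ, x ^ a = y :=
  mem_powers_iff_mem_zpowers.symm.trans (Submonoid.mem_powers_iff y x)

theorem zp_pow_cop (hG : IsPGroup p G) {a : ℕ} (ha : a.Coprime p) (x : G) :
    Subgroup.zpowers (x ^ a) = Subgroup.zpowers x := by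
  obtain ⟨b, _, hb⟩ := cop_inv hG ha
  apply le_antisymm
  · rw [Subgroup.zpowers_le]; exact Subgroup.npow_mem_zpowers x a
  · rw [Subgroup.zpowers_le, mem_zp_iff]; exact ⟨b, hb x⟩

theorem exists_pp (hG : IsPGroup p G) {x y : G} (hy : y ∈ Subgroup.zpowers x) :
    ∃ i : ℕ, Subgroup.zpowers y = Subgroup.zpowers (x ^ p ^ i) := by
  obtain ⟨a, rfl⟩ := (mem_zp_iff x y).1 hy
  by_cases h0 : a = 0
  · obtain ⟨N, hN⟩ := IsPGroup.iff_card.1 hG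
    refine ⟨N, ?_⟩
    rw [← hN, h0]; simp
  · obtain ⟨i, b, hb, rfl⟩ := Nat.exists_eq_pow_mul_and_not_dvd h0 p hpf.out.ne_one
    refine ⟨i, ?_⟩
    rw [pow_mul]
    exact zp_pow_cop hG ((Nat.Prime.coprime_iff_not_dvd hpf.out).2 hb).symm _

theorem zp_total [IsCyclic G] (hG : IsPGroup p G) (x y : G) :
    x ∈ Subgroup.zpowers y ∨ y ∈ Subgroup.zpowers x := by
  obtain ⟨g, hg⟩ := IsCyclic.exists_generator (α := G)
  obtain ⟨i, hi⟩ := exists_pp hG (hg x)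
  obtain ⟨j, hj⟩ := exists_pp hG (hg y)
  rw [← Subgroup.zpowers_le, ← Subgroup.zpowers_le (g := y), hi, hj]
  rcases le_total i j with h | h
  · right; rw [Subgroup.zpowers_le, mem_zp_iff]
    exact ⟨p ^ (j - i), by rw [← pow_mul, ← pow_add, Nat.add_sub_cancel' h]⟩
  · left; rw [Subgroup.zpowers_le, mem_zp_iff]
    exact ⟨p ^ (i - j), by rw [← pow_mul, ← pow_add, Nat.add_sub_cancel' h]⟩

theorem mem_of_not_mem [IsCyclic G] (hG : IsPGroup p G) {H : Subgroup G} {x y : G}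
    (hx : x ∉ H) (hy : y ∈ H) : y ∈ Subgroup.zpowers x := by
  rcases zp_total hG x y with h | h
  · exact absurd ((Subgroup.zpowers_le.2 hy) h) hx
  · exact h

theorem sub_total [IsCyclic G] (hG : IsPGroup p G) (H K : Subgroup G) : H ≤ K ∨ K ≤ H := by
  by_contra! h
  obtain ⟨x, hx, hx'⟩ := SetLike.not_le_iff_exists.1 h.1
  apply h.2
  intro y hy
  exact Subgroup.zpowers_le.2 hx (mem_of_not_mem hG hx' hy)

theorem cop_of_not (hG : IsPGroup p G) {x y : G} (hy : y ∈ Subgroup.zpowers x)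
    (hy' : y ∉ Subgroup.zpowers (x ^ p)) : ∃ a : ℕ, a.Coprime p ∧ x ^ a = y := by
  obtain ⟨a, rfl⟩ := (mem_zp_iff x y).1 hy
  refine ⟨a, ((Nat.Prime.coprime_iff_not_dvd hpf.out).2 fun hd => hy' ?_).symm, rfl⟩
  obtain ⟨b, rfl⟩ := hd
  rw [mem_zp_iff]; exact ⟨b, by rw [pow_mul]⟩

theorem mem_zp_p [IsCyclic G] (hG : IsPGroup p G) {H : Subgroup G} {x y : G}
    (hx : x ∉ H) (hy : y ∈ H) : y ∈ Subgroup.zpowers (x ^ p) := by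
  by_contra h
  obtain ⟨a, ha, rfl⟩ := cop_of_not hG (mem_of_not_mem hG hx hy) h
  apply hx
  have := zp_pow_cop hG ha x
  exact (Subgroup.zpowers_le.2 hy) (this ▸ Subgroup.mem_zpowers x)

theorem ord_p_mem [IsCyclic G] (hG : IsPGroup p G) {e w : G} (he : e ^ p = 1) (hw : w ≠ 1) :
    e ∈ Subgroup.zpowers w := by
  rcases zp_total hG e w with h | h
  · exact h
  · by_cases h2 : w ∈ Subgroup.zpowers (e ^ p)
    · rw [he] at h2; simp at h2; exact absurd h2 hw
    · obtain ⟨a, ha, rfl⟩ := cop_of_not hG h h2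
      rw [zp_pow_cop hG ha]; exact Subgroup.mem_zpowers e

theorem exists_e (hG : IsPGroup p G) {w : G} (hw : w ≠ 1) :
    ∃ e ∈ Subgroup.zpowers w, e ≠ 1 ∧ e ^ p = 1 := by
  obtain ⟨k, hk⟩ := IsPGroup.iff_orderOf.1 hG w
  have hk0 : k ≠ 0 := by rintro rfl; simp at hk; exact hw hk
  refine ⟨w ^ p ^ (k - 1), Subgroup.npow_mem_zpowers _ _, fun h => ?_, ?_⟩
  · have := orderOf_dvd_of_pow_eq_one h
    rw [hk, Nat.pow_dvd_pow_iff_le_right hpf.out.one_lt] at this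
    omega
  · rw [← pow_mul, ← pow_succ, Nat.sub_add_cancel (by omega), ← hk, pow_orderOf_eq_one]

theorem pow_aut (hG : IsPGroup p G) {a : ℕ} (ha : a.Coprime p) :
    ∃ f : MulAut G, ∀ y : G, f y = y ^ a := by
  obtain ⟨b, _, hb⟩ := cop_inv hG ha
  have h2 : ∀ y : G, (y ^ b) ^ a = y := fun y => by rw [pow_right_comm]; exact hb y
  exact ⟨MulEquiv.mk ⟨fun y => y ^ a, fun y => y ^ b, hb, h2⟩ (fun x y => mul_pow x y a),
    fun y => rfl⟩

theorem aut_pow [IsCyclic G] (hG : IsPGroup p G) (f : MulAut G) :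
    ∃ a : ℕ, a.Coprime p ∧ ∀ y : G, f y = y ^ a := by
  obtain ⟨g, hg⟩ := IsCyclic.exists_generator (α := G)
  by_cases h1 : g = 1
  · refine ⟨1, by simp, fun y => ?_⟩
    have : ∀ y : G, y = 1 := fun y => by
      have := hg y; rw [h1] at this; simpa using this
    rw [this (f y), this y]; simp
  · have key : f g ∉ Subgroup.zpowers (g ^ p) := by
      intro h
      obtain ⟨b, hb⟩ := (mem_zp_iff _ _).1 h
      have h2 : g = (f.symm g ^ p) ^ b := by
        apply f.injective
        simp [hb]
      obtain ⟨c, hc⟩ := (mem_zp_iff _ _).1 (hg (f.symm g))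
      obtain ⟨e, he, he1, hep⟩ := exists_e hG h1
      obtain ⟨d, rfl⟩ := (mem_zp_iff _ _).1 he
      apply he1
      rw [h2, ← hc]
      calc (((g ^ c) ^ p) ^ b) ^ d = (((g ^ d) ^ p) ^ c) ^ b := by
            simp only [← pow_mul]; congr 1; ring
        _ = 1 := by rw [hep]; simp
    obtain ⟨a, ha, haf⟩ := cop_of_not hG (hg (f g)) key
    refine ⟨a, ha, fun y => ?_⟩
    obtain ⟨c, rfl⟩ := (mem_zp_iff _ _).1 (hg y)
    rw [map_pow, ← haf, pow_right_comm]

theorem lte (hp3 : 3 ≤ p) (hG : IsPGroup p G) {x y : G} (hy : y ∈ Subgroup.zpowers (x ^ p)) :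
    ∃ m : ℕ, m.Coprime p ∧ x ^ m = x * y ∧
      ∀ w ∈ Subgroup.zpowers y, ∃ c : ℕ, x ^ m ^ c = x * w := by
  obtain ⟨a, rfl⟩ := (mem_zp_iff _ _).1 hy
  have hcop : (1 + p * a).Coprime p := by simp
  refine ⟨1 + p * a, hcop, by rw [pow_add, pow_one, pow_mul], fun w hw => ?_⟩
  rcases Nat.eq_zero_or_pos a with rfl | ha
  · simp at hw; subst hw; exact ⟨0, by simp⟩
  set m := 1 + p * a with hm
  set y := (x ^ p) ^ a with hyd
  have hym : y = x ^ (m - 1) := by rw [hyd, ← pow_mul, hm]; congr 1; omega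
  have hmem : ∀ c : ℕ, x⁻¹ * x ^ m ^ c ∈ Subgroup.zpowers y := by
    intro c
    have h1 : m - 1 ∣ m ^ c - 1 := by simpa using Nat.sub_dvd_pow_sub_pow m 1 c
    obtain ⟨d, hd⟩ := h1
    have h2 : 1 ≤ m ^ c := Nat.one_le_pow _ _ (by omega)
    have h3 : m ^ c = 1 + (m - 1) * d := by omega
    rw [h3, pow_add, pow_one, inv_mul_cancel_left, pow_mul, ← hym]
    exact Subgroup.npow_mem_zpowers _ _
  obtain ⟨k, hk⟩ := IsPGroup.iff_orderOf.1 hG x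
  have hinj' : ∀ c d : ℕ, c < d → d < orderOf y → x ^ m ^ c ≠ x ^ m ^ d := by
    intro c d hcd hd h
    obtain ⟨b, _, hb⟩ := cop_inv hG (Nat.Coprime.pow_left c hcop)
    have h4 : x ^ m ^ (d - c) = x := by
      have h5 : m ^ d = m ^ (d - c) * m ^ c := by
        rw [← pow_add, Nat.sub_add_cancel hcd.le]
      rw [h5, pow_mul] at h
      rw [← hb (x ^ m ^ (d - c)), ← h, hb]
    set e := d - c with he
    have he0 : e ≠ 0 := by omega
    have h6 : 1 ≤ m ^ e := Nat.one_le_pow _ _ (by omega)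
    have h7 : x ^ (m ^ e - 1) = 1 := by
      have : x ^ (m ^ e - 1) * x = 1 * x := by
        rw [← pow_succ, Nat.sub_add_cancel h6, h4, one_mul]
      exact mul_right_cancel this
    have h8 : p ^ k ∣ m ^ e - 1 := by rw [← hk]; exact orderOf_dvd_of_pow_eq_one h7
    have hpa : 0 < p * a := Nat.mul_pos hpf.out.pos ha
    have hv := padicValNat.pow_sub_pow (p := p) (x := m) (y := 1)
      (hpf.out.odd_of_ne_two (by omega)) (by omega) (by rw [hm]; simp)
      ((Nat.Prime.coprime_iff_not_dvd hpf.out).1 hcop.symm) he0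
    rw [one_pow] at hv
    have hme : m ^ e - 1 ≠ 0 := by
      have : 1 < m ^ e := Nat.one_lt_pow he0 (by omega)
      omega
    have h9 : k ≤ padicValNat p (m ^ e - 1) := (padicValNat_dvd_iff_le hme).1 h8
    have h10 : p ^ k ∣ (m - 1) * p ^ padicValNat p e := by
      refine (pow_dvd_pow p (h9.trans hv.le)).trans ?_
      rw [pow_add]
      exact Nat.mul_dvd_mul pow_padicValNat_dvd dvd_rfl
    have h11 : y ^ p ^ padicValNat p e = 1 := by
      rw [hym, ← pow_mul, ← orderOf_dvd_iff_pow_eq_one, hk]; exact h10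
    have h12 := (orderOf_dvd_of_pow_eq_one h11).trans (pow_padicValNat_dvd)
    have := Nat.le_of_dvd (by omega) h12
    omega
  let F : Fin (orderOf y) → Subgroup.zpowers y := fun c => ⟨_, hmem c⟩
  have hF : Function.Injective F := by
    intro c d h
    have h' : x ^ m ^ (c : ℕ) = x ^ m ^ (d : ℕ) := by
      have := congrArg Subtype.val h
      exact mul_left_cancel this
    rcases lt_trichotomy (c : ℕ) d with hl | hl | hl
    · exact absurd h' (hinj' _ _ hl d.2)
    · exact Fin.ext hl
    · exact absurd h'.symm (hinj' _ _ hl c.2)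
  have hb : Function.Bijective F :=
    (Nat.bijective_iff_injective_and_card F).2 ⟨hF, by simp⟩
  obtain ⟨c, hc⟩ := hb.2 ⟨w, hw⟩
  refine ⟨c, ?_⟩
  have := congrArg Subtype.val hc
  simp only [F] at this
  rw [← this]; simp

theorem card_zp (hG : IsPGroup p G) {x : G} (hx : x ≠ 1) :
    Nat.card (Subgroup.zpowers x) = p * Nat.card (Subgroup.zpowers (x ^ p)) := by
  rw [Nat.card_zpowers, Nat.card_zpowers, orderOf_pow]
  obtain ⟨k, hk⟩ := IsPGroup.iff_orderOf.1 hG x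
  have hk0 : k ≠ 0 := by rintro rfl; simp at hk; exact hx hk
  have : p ∣ orderOf x := by rw [hk]; exact dvd_pow_self p hk0
  rw [Nat.gcd_eq_right this, Nat.mul_div_cancel' this]

end grp

end CircAux

namespace CircAux

/-- Schur partition: `κ` is the class map. -/
structure SR {G : Type*} [CommGroup G] {ι : Type*} (κ : G → ι) : Prop where
  one : ∀ x, κ x = κ 1 → x = 1
  inv : ∀ x y, κ x = κ y → κ x⁻¹ = κ y⁻¹
  mul : ∀ x y, κ x = κ y → ∀ a b, Nat.card {g // κ g = a ∧ κ (g⁻¹ * x) = b} =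
    Nat.card {g // κ g = a ∧ κ (g⁻¹ * y) = b}

/-- unions of classes -/
def ASet {G : Type*} {ι : Type*} (κ : G → ι) (S : Set G) : Prop :=
  ∀ x y, κ x = κ y → x ∈ S → y ∈ S

theorem equiv_of_card {A B C : Type*} [Finite A] [Finite B] (f : A → C) (f' : B → C)
    (h : ∀ c, Nat.card {a // f a = c} = Nat.card {b // f' b = c}) :
    ∃ σ : A ≃ B, ∀ a, f' (σ a) = f a := by
  have h2 : ∀ c, Nonempty ({a // f a = c} ≃ {b // f' b = c}) := fun c => Finite.card_eq.1 (h c)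
  let τ : ∀ c, {a // f a = c} ≃ {b // f' b = c} := fun c => (h2 c).some
  refine ⟨(Equiv.sigmaFiberEquiv f).symm.trans
    ((Equiv.sigmaCongrRight τ).trans (Equiv.sigmaFiberEquiv f')), fun a => ?_⟩
  exact (τ (f a) ⟨a, rfl⟩).2

section sr
variable {G : Type*} [CommGroup G] [Finite G] {ι : Type*} {κ : G → ι}

theorem SR.equiv (h : SR κ) {x y : G} (hxy : κ x = κ y) :
    ∃ σ : G ≃ G, ∀ g, κ (σ g) = κ g ∧ κ ((σ g)⁻¹ * y) = κ (g⁻¹ * x) := by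
  obtain ⟨σ, hσ⟩ := equiv_of_card (fun g => (κ g, κ (g⁻¹ * x))) (fun g => (κ g, κ (g⁻¹ * y)))
    (by rintro ⟨a, b⟩; simpa [Prod.ext_iff] using h.mul x y hxy a b)
  exact ⟨σ, fun g => by simpa [Prod.ext_iff] using hσ g⟩

/-- splitting -/
theorem SR.split (h : SR κ) {u v z : G} (hz : κ (u * v) = κ z) :
    ∃ u' v', κ u' = κ u ∧ κ v' = κ v ∧ u' * v' = z := by
  obtain ⟨σ, hσ⟩ := h.equiv hz
  refine ⟨σ u, (σ u)⁻¹ * z, (hσ u).1, ?_, by simp⟩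
  rw [(hσ u).2]; simp

/-- convolution counts -/
theorem SR.conv (h : SR κ) {A B : Set G} (hA : ASet κ A) (hB : ASet κ B) {x y : G}
    (hxy : κ x = κ y) :
    Nat.card {g // g ∈ A ∧ g⁻¹ * x ∈ B} = Nat.card {g // g ∈ A ∧ g⁻¹ * y ∈ B} := by
  obtain ⟨σ, hσ⟩ := h.equiv hxy
  refine Nat.card_congr (σ.subtypeEquiv fun g => ?_)
  constructor
  · rintro ⟨h1, h2⟩; exact ⟨hA _ _ (hσ g).1.symm h1, hB _ _ (hσ g).2.symm h2⟩
  · rintro ⟨h1, h2⟩; exact ⟨hA _ _ (hσ g).1 h1, hB _ _ (hσ g).2 h2⟩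

theorem SR.conv_sum (h : SR κ) [Fintype G] {k : Type*} [CommSemiring k] {φ ψ : G → k}
    (hφ : ∀ x y, κ x = κ y → φ x = φ y) (hψ : ∀ x y, κ x = κ y → ψ x = ψ y) {x y : G}
    (hxy : κ x = κ y) : ∑ g, φ g * ψ (g⁻¹ * x) = ∑ g, φ g * ψ (g⁻¹ * y) := by
  obtain ⟨σ, hσ⟩ := h.equiv hxy
  rw [← Equiv.sum_comp σ (fun g => φ g * ψ (g⁻¹ * y))]
  refine Finset.sum_congr rfl fun g _ => ?_
  simp only [hφ _ _ (hσ g).1, hψ _ _ (hσ g).2]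

theorem SR.pow_const (h : SR κ) [Fintype G] {k : Type*} [CommSemiring k]
    (f : MonoidAlgebra k G) (hf : ∀ x y, κ x = κ y → f.coeff x = f.coeff y) (n : ℕ) :
    ∀ x y, κ x = κ y → (f ^ n).coeff x = (f ^ n).coeff y := by
  induction n with
  | zero =>
    intro x y hxy
    rw [pow_zero, MonoidAlgebra.one_def]
    by_cases hx : x = 1
    · subst hx; rw [h.one y hxy.symm]
    · have hy : y ≠ 1 := by rintro rfl; exact hx (h.one x hxy)
      simp [Finsupp.single_apply, hx, hy, Ne.symm hx, Ne.symm hy]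
  | succ n ih =>
    intro x y hxy
    have key : ∀ z, (f ^ (n + 1)).coeff z = ∑ g, (f ^ n).coeff g * f.coeff (g⁻¹ * z) := by
      intro z
      rw [pow_succ, MonoidAlgebra.coeff_mul_apply_left, Finsupp.sum_fintype]
      simp
    rw [key, key]
    exact h.conv_sum (φ := (f ^ n).coeff) (ψ := f.coeff) ih hf hxy

theorem SR.frob (h : SR κ) {l : ℕ} [Fact l.Prime] {S : Set G} (hS : ASet κ S) {x y : G}
    (hxy : κ x = κ y) :
    (Nat.card {s // s ∈ S ∧ s ^ l = x} : ZMod l) = (Nat.card {s // s ∈ S ∧ s ^ l = y} : ZMod l) := by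
  classical
  cases nonempty_fintype G
  have : CharP (MonoidAlgebra (ZMod l) G) l := charP_of_injective_algebraMap
    (R := ZMod l) (FaithfulSMul.algebraMap_injective _ _) l
  let T : Finset G := Finset.univ.filter (· ∈ S)
  let f : MonoidAlgebra (ZMod l) G := ∑ s ∈ T, MonoidAlgebra.single s 1
  have hf : ∀ z, f.coeff z = if z ∈ S then 1 else 0 := by
    intro z
    simp [f, T, Finsupp.single_apply, MonoidAlgebra.coeff_sum, MonoidAlgebra.single_pow, Finsupp.finsetSum_apply]
  have hfc : ∀ x y, κ x = κ y → f.coeff x = f.coeff y := by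
    intro x y hxy
    rw [hf, hf]
    have : x ∈ S ↔ y ∈ S := ⟨hS _ _ hxy, hS _ _ hxy.symm⟩
    simp [this]
  have hfl : ∀ z, (f ^ l).coeff z = (Nat.card {s // s ∈ S ∧ s ^ l = z} : ZMod l) := by
    intro z
    rw [sum_pow_char]
    simp [T, Finsupp.single_apply, MonoidAlgebra.coeff_sum, MonoidAlgebra.single_pow, Finsupp.finsetSum_apply, Finset.filter_filter,
      Fintype.card_subtype]
  rw [← hfl, ← hfl]
  exact h.pow_const f hfc l x y hxy

theorem SR.pow_prime (h : SR κ) {l : ℕ} (hl : l.Prime) (hc : (Nat.card G).Coprime l) {x y : G}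
    (hxy : κ x = κ y) : κ (x ^ l) = κ (y ^ l) := by
  -- T = class of x ; its l-th power is an ASet containing x^l; hence class of x^l ⊆ T^(l)
  have : Fact l.Prime := ⟨hl⟩
  have hinj : Function.Injective (fun z : G => z ^ l) := (powCoprime hc).injective
  have hcard : ∀ (S : Set G) (z : G), Nat.card {s // s ∈ S ∧ s ^ l = z} ≤ 1 := by
    intro S z
    rw [Finite.card_le_one_iff_subsingleton]
    exact ⟨fun a b => Subtype.ext (hinj (a.2.2.trans b.2.2.symm))⟩
  -- images of ASets are ASets
  have key : ∀ S : Set G, ASet κ S → ∀ s ∈ S, ∀ z, κ (s ^ l) = κ z → ∃ s' ∈ S, s' ^ l = z := by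
    intro S hS s hs z hz
    by_contra! hcon
    have h1 := h.frob (l := l) hS hz
    have h2 : Nat.card {t // t ∈ S ∧ t ^ l = z} = 0 := by
      have : IsEmpty {t // t ∈ S ∧ t ^ l = z} := ⟨fun t => hcon t.1 t.2.1 t.2.2⟩
      exact Nat.card_of_isEmpty
    have h3 : Nat.card {t // t ∈ S ∧ t ^ l = s ^ l} = 1 := by
      have : Nonempty {t // t ∈ S ∧ t ^ l = s ^ l} := ⟨⟨s, hs, rfl⟩⟩
      exact le_antisymm (hcard _ _) Finite.card_pos
    rw [h2, h3] at h1
    simp at h1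
  -- q: lift of classes through bijection is refined; counting argument
  have ref : ∀ u v : G, κ (u ^ l) = κ (v ^ l) → κ u = κ v := by
    intro u v huv
    obtain ⟨s', hs', he⟩ := key {z | κ z = κ u} (fun a b hab ha => hab.symm.trans ha) u rfl _ huv
    rw [← hinj he]; exact hs'.symm
  have ref' : ∀ (j : ℕ) (u v : G), κ (u ^ l ^ j) = κ (v ^ l ^ j) → κ u = κ v := by
    intro j
    induction j with
    | zero => intro u v huv; simpa using huv
    | succ j ih =>
      intro u v huv
      rw [pow_succ', pow_mul, pow_mul] at huv
      exact ref _ _ (ih _ _ huv)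
  have hpos : 0 < Nat.totient (Nat.card G) := Nat.totient_pos.2 Nat.card_pos
  have hid : ∀ z : G, (z ^ l) ^ l ^ (Nat.totient (Nat.card G) - 1) = z := by
    intro z
    rw [← pow_mul, ← pow_succ', Nat.sub_add_cancel hpos]
    have := (pow_eq_pow_iff_modEq (x := z)).2
      ((Nat.ModEq.pow_totient hc.symm).of_dvd (orderOf_dvd_natCard z))
    simpa using this
  exact ref' (Nat.totient (Nat.card G) - 1) _ _ (by rw [hid, hid]; exact hxy)

theorem SR.pow_cop (h : SR κ) {m : ℕ} (hc : (Nat.card G).Coprime m) (hm : m ≠ 0) :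
    ∀ {x y : G}, κ x = κ y → κ (x ^ m) = κ (y ^ m) := by
  induction m using Nat.recOnMul with
  | zero => exact absurd rfl hm
  | one => intro x y h; simpa using h
  | prime l hl => intro x y hxy; exact h.pow_prime hl hc hxy
  | mul a b iha ihb =>
    intro x y hxy
    rw [pow_mul, pow_mul]
    exact ihb (Nat.Coprime.coprime_mul_left_right hc) (by rintro rfl; simp at hm)
      (iha (Nat.Coprime.coprime_mul_right_right hc) (by rintro rfl; simp at hm) hxy)

theorem SR.pow_p (h : SR κ) {p : ℕ} [hpf : Fact p.Prime] (hG : IsPGroup p G) {m : ℕ}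
    (hc : m.Coprime p) {x y : G} (hxy : κ x = κ y) : κ (x ^ m) = κ (y ^ m) := by
  obtain ⟨N, hN⟩ := IsPGroup.iff_card.1 hG
  refine h.pow_cop (by rw [hN]; exact Nat.Coprime.pow_left N hc.symm) ?_ hxy
  rintro rfl
  simp at hc; exact hpf.out.ne_one hc

theorem SR.aut [IsCyclic G] (h : SR κ) {p : ℕ} [hpf : Fact p.Prime] (hG : IsPGroup p G)
    (f : MulAut G) {x y : G} (hxy : κ x = κ y) : κ (f x) = κ (f y) := by
  obtain ⟨a, ha, hf⟩ := aut_pow hG f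
  rw [hf, hf]; exact h.pow_p hG ha hxy

end sr
end CircAux

namespace CircAux
section sr2
variable {G : Type*} [CommGroup G] [Finite G] {ι : Type*} {κ : G → ι}

theorem ASet.cls (x : G) : ASet κ {t | κ t = κ x} := fun _ _ hab ha => hab.symm.trans ha

theorem SR.full (h : SR κ) {N : Subgroup G} (hN : ASet κ (N : Set G)) {x t : G}
    (hx : ∀ n ∈ N, κ (n * x) = κ x) (ht : κ t = κ x) : ∀ n ∈ N, κ (n * t) = κ x := by
  have h1 := h.conv hN (ASet.cls (κ := κ) x) ht
  have h2 : {g | g ∈ N ∧ g⁻¹ * x ∈ {t | κ t = κ x}} = (N : Set G) := by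
    ext g
    exact ⟨fun h => h.1, fun hg => ⟨hg, hx _ (N.inv_mem hg)⟩⟩
  have h3 : {g | g ∈ N ∧ g⁻¹ * t ∈ {t | κ t = κ x}} = (N : Set G) := by
    apply Set.eq_of_subset_of_ncard_le (fun g hg => hg.1)
    have : Set.ncard {g | g ∈ N ∧ g⁻¹ * t ∈ {t | κ t = κ x}} =
      Set.ncard {g | g ∈ N ∧ g⁻¹ * x ∈ {t | κ t = κ x}} := h1
    rw [this, h2]
  intro n hn
  have : n⁻¹ ∈ {g | g ∈ N ∧ g⁻¹ * t ∈ {t | κ t = κ x}} := by rw [h3]; exact N.inv_mem hn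
  simpa using this.2

theorem SR.corr (h : SR κ) (x : G) {g g' : G} (hg : κ g = κ g') :
    Nat.card {t // κ t = κ x ∧ κ (t * g) = κ x} =
      Nat.card {t // κ t = κ x ∧ κ (t * g') = κ x} := by
  have hA : ASet κ {s : G | κ s⁻¹ = κ x} := fun a b hab ha => (h.inv a b hab).symm.trans ha
  have h1 := h.conv hA (ASet.cls (κ := κ) x) hg
  have h2 : ∀ g, Nat.card {s // s ∈ {s : G | κ s⁻¹ = κ x} ∧ s⁻¹ * g ∈ {t | κ t = κ x}} =
      Nat.card {t // κ t = κ x ∧ κ (t * g) = κ x} := fun g =>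
    Nat.card_congr ((Equiv.inv G).subtypeEquiv fun s => Iff.rfl)
  rw [h2, h2] at h1
  exact h1

/-- radical of the class of `x` -/
def rad (κ : G → ι) (x : G) : Subgroup G :=
  have hpow : ∀ g : G, (∀ t, κ t = κ x → κ (g * t) = κ x) → ∀ n : ℕ, ∀ t, κ t = κ x →
      κ (g ^ n * t) = κ x := by
    intro g hg n
    induction n with
    | zero => intro t ht; simpa using ht
    | succ n ih => intro t ht; rw [pow_succ, mul_assoc]; exact ih _ (hg t ht)
  { carrier := {g | ∀ t, κ t = κ x → κ (g * t) = κ x}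
    one_mem' := fun t ht => by simpa using ht
    mul_mem' := fun {a b} ha hb t ht => by rw [mul_assoc]; exact ha _ (hb t ht)
    inv_mem' := fun {g} hg t ht => by
      have : g⁻¹ = g ^ (orderOf g - 1) := by
        rw [inv_eq_iff_mul_eq_one, ← pow_succ', Nat.sub_add_cancel (orderOf_pos g),
          pow_orderOf_eq_one]
      rw [this]; exact hpow g hg _ t ht }

theorem mem_rad {x g : G} : g ∈ rad κ x ↔ ∀ t, κ t = κ x → κ (g * t) = κ x := Iff.rfl

theorem SR.rad_aset (h : SR κ) (x : G) : ASet κ (rad κ x : Set G) := by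
  intro g g' hg hr
  have h1 := h.corr x hg
  have h2 : {t | κ t = κ x ∧ κ (t * g) = κ x} = {t | κ t = κ x} := by
    ext t
    exact ⟨fun h => h.1, fun ht => ⟨ht, by rw [mul_comm]; exact hr t ht⟩⟩
  have h3 : {t | κ t = κ x ∧ κ (t * g') = κ x} = {t | κ t = κ x} := by
    apply Set.eq_of_subset_of_ncard_le (fun g hg => hg.1)
    have : Set.ncard {t | κ t = κ x ∧ κ (t * g) = κ x} =
      Set.ncard {t | κ t = κ x ∧ κ (t * g') = κ x} := h1
    rw [← this, h2]
  intro t ht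
  have : t ∈ {t | κ t = κ x ∧ κ (t * g') = κ x} := by rw [h3]; exact ht
  rw [mul_comm]; exact this.2

/-- quotient partition -/
def kq (κ : G → ι) (R : Subgroup G) : G ⧸ R → Set ι := fun q => κ '' {g | (g : G ⧸ R) = q}

theorem SR.kq_sub (h : SR κ) {R : Subgroup G} (hR : ASet κ (R : Set G)) {x z : G}
    (hz : κ z = κ x) : kq κ R (x : G ⧸ R) ⊆ kq κ R (z : G ⧸ R) := by
  rintro _ ⟨w, hw, rfl⟩
  have hw' : w⁻¹ * x ∈ R := QuotientGroup.eq.1 hw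
  obtain ⟨u, v, hu, hv, rfl⟩ := h.split (u := w) (v := w⁻¹ * x) (z := z) (by simpa using hz.symm)
  refine ⟨u, ?_, hu⟩
  have : v ∈ R := hR _ _ hv.symm hw'
  exact QuotientGroup.eq.2 (by simpa using this)

theorem SR.kq_eq (h : SR κ) {R : Subgroup G} (hR : ASet κ (R : Set G)) {x z : G}
    (hz : κ z = κ x) : kq κ R (z : G ⧸ R) = kq κ R (x : G ⧸ R) :=
  (h.kq_sub hR hz.symm).antisymm (h.kq_sub hR hz)

theorem kq_exists {R : Subgroup G} {x y : G}
    (hz : kq κ R (x : G ⧸ R) = kq κ R (y : G ⧸ R)) : ∃ z, κ z = κ x ∧ (z : G ⧸ R) = y := by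
  have : κ x ∈ kq κ R (y : G ⧸ R) := by rw [← hz]; exact ⟨x, rfl, rfl⟩
  obtain ⟨z, hz, hk⟩ := this
  exact ⟨z, hk, hz⟩

theorem SR.quot (h : SR κ) {R : Subgroup G} (hR : ASet κ (R : Set G)) : SR (kq κ R) where
  one q hq := by
    induction q using QuotientGroup.induction_on with | H x
    obtain ⟨z, hz, hz1⟩ := kq_exists (y := 1) hq
    have hzR : z ∈ R := (QuotientGroup.eq_one_iff z).1 hz1
    exact (QuotientGroup.eq_one_iff x).2 (hR _ _ hz hzR)
  inv q q' hq := by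
    induction q using QuotientGroup.induction_on with | H x
    induction q' using QuotientGroup.induction_on with | H y
    obtain ⟨z, hz, hz1⟩ := kq_exists hq
    rw [← hz1, ← QuotientGroup.mk_inv, ← QuotientGroup.mk_inv]
    exact h.kq_eq hR (h.inv _ _ hz.symm)
  mul q q' hq a b := by
    induction q using QuotientGroup.induction_on with | H x
    induction q' using QuotientGroup.induction_on with | H y
    obtain ⟨z, hz, hz1⟩ := kq_exists hq
    rw [← hz1]
    have hA : ∀ a, ASet κ {g : G | kq κ R (g : G ⧸ R) = a} := fun a u v huv hu =>
      (h.kq_eq hR huv.symm).trans hu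
    have h1 := h.conv (hA a) (hA b) hz
    have h2 : ∀ x : G, Nat.card {g // g ∈ {g : G | kq κ R (g : G ⧸ R) = a} ∧
        g⁻¹ * x ∈ {g : G | kq κ R (g : G ⧸ R) = b}} =
        Nat.card R * Nat.card {q // kq κ R q = a ∧ kq κ R (q⁻¹ * (x : G ⧸ R)) = b} := by
      intro x
      rw [← Nat.card_prod]
      exact Nat.card_congr (QuotientGroup.preimageMkEquivSubgroupProdSet R
        {q | kq κ R q = a ∧ kq κ R (q⁻¹ * (x : G ⧸ R)) = b})
    rw [h2, h2] at h1
    exact (Nat.eq_of_mul_eq_mul_left Nat.card_pos h1).symm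

variable {p : ℕ} [hpf : Fact p.Prime] [IsCyclic G]

theorem exists_max (hG : IsPGroup p G) (x : G) :
    ∃ x', κ x' = κ x ∧ ∀ t, κ t = κ x → t ∈ Subgroup.zpowers x' := by
  haveI : Nonempty {t // κ t = κ x} := ⟨⟨x, rfl⟩⟩
  obtain ⟨x', hx'⟩ := Finite.exists_max (fun t : {t // κ t = κ x} =>
    Nat.card (Subgroup.zpowers t.1))
  refine ⟨x', x'.2, fun t ht => ?_⟩
  rcases zp_total hG t x'.1 with h1 | h1
  · exact h1
  · have h2 := Subgroup.eq_of_le_of_card_ge (Subgroup.zpowers_le.2 h1) (hx' ⟨t, ht⟩)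
    rw [h2]; exact Subgroup.mem_zpowers t

theorem SR.zp_aset (h : SR κ) {g : G} (hg : ∀ t, κ t = κ g → t ∈ Subgroup.zpowers g) :
    ASet κ (Subgroup.zpowers g : Set G) := by
  have key : ∀ a : ℕ, ∀ y, κ (g ^ a) = κ y → y ∈ Subgroup.zpowers g := by
    intro a
    induction a with
    | zero => intro y hy; rw [h.one y (by simpa using hy.symm)]; exact Subgroup.one_mem _
    | succ a ih =>
      intro y hy
      rw [pow_succ] at hy
      obtain ⟨u, v, hu, hv, rfl⟩ := h.split hy
      exact Subgroup.mul_mem _ (ih u hu.symm) (hg v hv)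
  intro x y hxy hx
  obtain ⟨a, rfl⟩ := (mem_zp_iff _ _).1 hx
  exact key a y hxy

theorem SR.count (h : SR κ) (hp3 : 3 ≤ p) (hG : IsPGroup p G) {x : G} (hx1 : x ≠ 1)
    (hT : ∀ t, κ t = κ x → t ∈ Subgroup.zpowers x) :
    Nat.card {t // κ t = κ x ∧ t ∈ Subgroup.zpowers (x ^ p)} <
      Nat.card {t // κ t = κ x ∧ t ∉ Subgroup.zpowers (x ^ p)} := by
  classical
  cases nonempty_fintype G
  haveI : Fintype (MulAut G) := Fintype.ofFinite _
  let A : G → ℕ := fun y => (Finset.univ.filter fun f : MulAut G => κ (f y) = κ x).card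
  have hA : ∀ y, A y ≤ A x := by
    intro y
    rcases Finset.eq_empty_or_nonempty
      (Finset.univ.filter fun f : MulAut G => κ (f y) = κ x) with h0 | ⟨f0, hf0⟩
    · simp only [A]; rw [h0]; simp
    · simp only [Finset.mem_filter, Finset.mem_univ, true_and] at hf0
      refine Finset.card_le_card_of_injOn (fun f => f * f0⁻¹) ?_ ?_
      · intro f hf
        simp only [Finset.coe_filter, Finset.mem_univ, true_and, Set.mem_setOf_eq] at hf ⊢
        have := h.aut hG (f * f0⁻¹) hf0
        rw [← this]
        simpa using hf
      · intro f _ f' _ hff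
        exact mul_right_cancel hff
  have hA' : ∀ y, y ∈ Subgroup.zpowers x → y ∉ Subgroup.zpowers (x ^ p) → A y = A x := by
    intro y hy hy'
    obtain ⟨a, ha, rfl⟩ := cop_of_not hG hy hy'
    obtain ⟨f0, hf0⟩ := pow_aut hG ha
    refine Finset.card_equiv (Equiv.mulRight f0) fun f => ?_
    simp [hf0]
  have dc : ∀ D : Finset G, (∀ (f : MulAut G) y, y ∈ D → f y ∈ D) →
      ∑ y ∈ D, A y = Fintype.card (MulAut G) * (D.filter fun y => κ y = κ x).card := by
    intro D hD
    simp only [A, Finset.card_filter]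
    rw [Finset.sum_comm]
    rw [← Finset.card_univ, ← smul_eq_mul, ← Finset.sum_const]
    refine Finset.sum_congr rfl fun f _ => ?_
    refine Finset.sum_equiv f.toEquiv (fun y => ⟨hD f y, fun hy => ?_⟩) (fun y _ => rfl)
    have := hD f⁻¹ _ hy
    simpa using this
  have stab : ∀ (w : G) (f : MulAut G) y, y ∈ Subgroup.zpowers w → f y ∈ Subgroup.zpowers w := by
    intro w f y hy
    obtain ⟨a, _, hf⟩ := aut_pow hG f
    rw [hf]; exact Subgroup.pow_mem _ hy a
  let D0 : Finset G := Finset.univ.filter (· ∈ Subgroup.zpowers (x ^ p))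
  let D : Finset G := Finset.univ.filter (· ∈ Subgroup.zpowers x)
  let D1 : Finset G := D \ D0
  have hsub : D0 ⊆ D := by
    intro y hy
    simp only [D0, D, Finset.mem_filter, Finset.mem_univ, true_and] at hy ⊢
    exact Subgroup.zpowers_le.2 (Subgroup.npow_mem_zpowers x p) hy
  have hcD : D.card = p * D0.card := by
    have := card_zp hG hx1
    simpa [D, D0, Nat.card_eq_fintype_card, Fintype.card_subtype] using this
  have hcD1 : D1.card + D0.card = D.card := Finset.card_sdiff_add_card_eq_card hsub
  have h0 := dc D0 (by
    intro f y hy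
    simp only [D0, Finset.mem_filter, Finset.mem_univ, true_and] at hy ⊢
    exact stab _ f y hy)
  have h1 := dc D1 (by
    intro f y hy
    simp only [D1, D, D0, Finset.mem_sdiff, Finset.mem_filter, Finset.mem_univ, true_and] at hy ⊢
    refine ⟨stab _ f y hy.1, fun hc => hy.2 ?_⟩
    have := stab _ f⁻¹ _ hc
    simpa using this)
  have h0' : ∑ y ∈ D0, A y ≤ D0.card * A x := by
    rw [← smul_eq_mul]; exact Finset.sum_le_card_nsmul _ _ _ fun y _ => hA y
  have h1' : ∑ y ∈ D1, A y = D1.card * A x := by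
    rw [← smul_eq_mul]; refine Finset.sum_eq_card_nsmul fun y hy => ?_
    simp only [D1, D, D0, Finset.mem_sdiff, Finset.mem_filter, Finset.mem_univ, true_and] at hy
    exact hA' y hy.1 hy.2
  have hAx : 0 < A x := Finset.card_pos.2 ⟨1, by simp⟩
  have hD0 : 0 < D0.card := Finset.card_pos.2 ⟨1, by simp [D0, Subgroup.one_mem]⟩
  have e0 : Nat.card {t // κ t = κ x ∧ t ∈ Subgroup.zpowers (x ^ p)} =
      (D0.filter fun y => κ y = κ x).card := by
    rw [Nat.card_eq_fintype_card, Fintype.card_subtype]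
    congr 1; ext t; simp [D0, and_comm]
  have e1 : Nat.card {t // κ t = κ x ∧ t ∉ Subgroup.zpowers (x ^ p)} =
      (D1.filter fun y => κ y = κ x).card := by
    rw [Nat.card_eq_fintype_card, Fintype.card_subtype]
    congr 1; ext t
    simp only [D1, D, D0, Finset.mem_sdiff, Finset.mem_filter, Finset.mem_univ, true_and]
    constructor
    · rintro ⟨a, b⟩; exact ⟨⟨hT t a, b⟩, a⟩
    · rintro ⟨⟨_, b⟩, a⟩; exact ⟨a, b⟩
  rw [e0, e1]
  have hlt : D0.card < D1.card := by nlinarith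
  have : D0.card * A x < D1.card * A x := Nat.mul_lt_mul_of_pos_right hlt hAx
  refine Nat.lt_of_mul_lt_mul_left (a := Fintype.card (MulAut G)) ?_
  rw [← h0, ← h1, h1']
  omega

/-- trivial radical gives a "normal" class. -/
theorem SR.key (h : SR κ) (hp3 : 3 ≤ p) (hG : IsPGroup p G) {x : G}
    (hT : ∀ t, κ t = κ x → t ∈ Subgroup.zpowers x)
    (hrad : ∀ g, g ∈ rad κ x → g = 1)
    {Q : Subgroup G} (hQ : ASet κ (Q : Set G)) {q : G} (hq : q ∈ Q) (hq1 : q ≠ 1) (hxQ : x ∉ Q) :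
    ∀ y ∈ Subgroup.zpowers (x ^ p), κ (x * y) = κ x → y = 1 := by
  have hx1 : x ≠ 1 := by rintro rfl; exact hxQ Q.one_mem
  -- W is closed under cyclic subgroups
  have W : ∀ y ∈ Subgroup.zpowers (x ^ p), κ (x * y) = κ x →
      ∀ w ∈ Subgroup.zpowers y, κ (x * w) = κ x := by
    intro y hy hxy w hw
    obtain ⟨m, hm, hxm, hc⟩ := lte hp3 hG hy
    have hit : ∀ c : ℕ, κ (x ^ m ^ c) = κ x := by
      intro c
      induction c with
      | zero => simp
      | succ c ih =>
        rw [pow_succ, pow_mul, h.pow_p hG hm ih, hxm, hxy]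
    obtain ⟨c, hc⟩ := hc w hw
    rw [← hc]; exact hit c
  intro y hy hxy
  by_contra hy1
  obtain ⟨e, hey, he1, hep⟩ := exists_e hG hy1
  have heQ : e ∈ Q := Subgroup.zpowers_le.2 hq (ord_p_mem hG hep hq1)
  have heW := W y hy hxy
  obtain ⟨g, hge, hgm⟩ := exists_max (κ := κ) hG e
  have hgQ : g ∈ Q := hQ _ _ hge.symm heQ
  have hN := h.zp_aset (g := g) (fun t ht => hgm t (ht.trans hge))
  -- correlation
  have hcor := h.corr x hge
  have hcount := h.count hp3 hG hx1 hT
  have hle1 : Nat.card {t // κ t = κ x ∧ t ∉ Subgroup.zpowers (x ^ p)} ≤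
      Nat.card {t // κ t = κ x ∧ κ (t * e) = κ x} := by
    apply Set.ncard_le_ncard (s := {t | κ t = κ x ∧ t ∉ Subgroup.zpowers (x ^ p)})
      (t := {t | κ t = κ x ∧ κ (t * e) = κ x})
    rintro t ⟨ht, htn⟩
    refine ⟨ht, ?_⟩
    obtain ⟨a, ha, rfl⟩ := cop_of_not hG (hT t ht) htn
    obtain ⟨b, hb, hab⟩ := cop_inv hG ha
    have h1 := heW (e ^ b) (Subgroup.pow_mem _ hey b)
    have h2 := h.pow_p hG ha h1
    rw [mul_pow, pow_right_comm, hab] at h2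
    rw [h2, ht]
  have hex : ∃ t, κ t = κ x ∧ κ (t * g) = κ x ∧ t ∉ Subgroup.zpowers (x ^ p) := by
    by_contra! hcon
    have : Nat.card {t // κ t = κ x ∧ κ (t * g) = κ x} ≤
        Nat.card {t // κ t = κ x ∧ t ∈ Subgroup.zpowers (x ^ p)} := by
      apply Set.ncard_le_ncard (s := {t | κ t = κ x ∧ κ (t * g) = κ x})
        (t := {t | κ t = κ x ∧ t ∈ Subgroup.zpowers (x ^ p)})
      rintro t ⟨ht, htg⟩
      exact ⟨ht, hcon t ht htg⟩
    omega
  obtain ⟨t, ht, htg, htn⟩ := hex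
  obtain ⟨a, ha, rfl⟩ := cop_of_not hG (hT t ht) htn
  obtain ⟨b, hb, hab⟩ := cop_inv hG ha
  have hxb : κ (x ^ b) = κ x := by
    have := h.pow_p hG hb ht
    rw [hab] at this; exact this.symm
  have hgb : κ (x * g ^ b) = κ x := by
    have := h.pow_p hG hb htg
    rw [mul_pow, hab] at this
    rw [this, hxb]
  have hgbm : g ^ b ∈ Subgroup.zpowers (x ^ p) :=
    mem_zp_p hG hxQ (Q.pow_mem hgQ b)
  have hall := W _ hgbm hgb
  rw [zp_pow_cop hG hb] at hall
  have hfull : g ∈ rad κ x := by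
    intro t ht
    exact h.full hN (x := x) (fun n hn => by rw [mul_comm]; exact hall n hn) ht g
      (Subgroup.mem_zpowers g)
  have hg1 := hrad g hfull
  rw [hg1] at hge
  exact he1 (h.one e hge.symm)

/-- `D(y)` -/
def DD (p : ℕ) (κ : G → ι) (y : G) : Prop :=
  ∃ S : Set G, ASet κ S ∧ y ∈ S ∧ ∀ w ∈ Subgroup.zpowers (y ^ p), y * w ∈ S → w = 1

theorem SR.dd_step (h : SR κ) (hG : IsPGroup p G) {y : G} (hy : DD p κ y) (hyp : y ^ p ≠ 1) :
    DD p κ (y ^ p) := by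
  obtain ⟨S, hS, hyS, hu⟩ := hy
  have huniq : ∀ s ∈ S, ∀ v ∈ Subgroup.zpowers (y ^ p), s ^ p = (y * v) ^ p → s = y := by
    intro s hs v hv hsv
    have h1 : (s * (y * v)⁻¹) ^ p = 1 := by rw [mul_pow, hsv, inv_pow, mul_inv_cancel]
    have h2 := ord_p_mem hG h1 hyp
    have h3 := hu (v * (s * (y * v)⁻¹)) (Subgroup.mul_mem _ hv h2)
      (by convert hs using 1; rw [mul_inv]; rw [← mul_assoc, mul_comm s, ← mul_assoc, ← mul_inv, mul_inv_cancel, one_mul])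
    have h4 : s = y * (v * (s * (y * v)⁻¹)) := by
      rw [mul_inv]; rw [← mul_assoc, mul_comm s, ← mul_assoc, ← mul_inv, mul_inv_cancel, one_mul]
    rw [h4, h3, mul_one]
  refine ⟨{z | (Nat.card {s // s ∈ S ∧ s ^ p = z} : ZMod p) ≠ 0}, ?_, ?_, ?_⟩
  · intro a b hab ha
    have := h.frob (l := p) hS hab
    simp only [Set.mem_setOf_eq] at ha ⊢
    rwa [← this]
  · have : Nat.card {s // s ∈ S ∧ s ^ p = y ^ p} = 1 := by
      rw [Nat.card_eq_one_iff_unique]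
      refine ⟨⟨fun a b => Subtype.ext ?_⟩, ⟨⟨y, hyS, rfl⟩⟩⟩
      rw [huniq a a.2.1 1 (Subgroup.one_mem _) (by rw [mul_one]; exact a.2.2),
        huniq b b.2.1 1 (Subgroup.one_mem _) (by rw [mul_one]; exact b.2.2)]
    simp only [Set.mem_setOf_eq]
    rw [this]; simp
  · intro w hw hwS
    have hne : Nat.card {s // s ∈ S ∧ s ^ p = y ^ p * w} ≠ 0 := by
      intro h0; apply hwS; rw [h0]; simp
    obtain ⟨⟨⟨s, hs, hsp⟩⟩, _⟩ := Nat.card_ne_zero.1 hne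
    obtain ⟨a, rfl⟩ := (mem_zp_iff _ _).1 hw
    have hv : (y ^ p) ^ a ∈ Subgroup.zpowers (y ^ p) := Subgroup.npow_mem_zpowers _ _
    have h1 : s ^ p = (y * (y ^ p) ^ a) ^ p := by
      rw [hsp, mul_pow, pow_right_comm (y ^ p) a p]
    have h2 := huniq s hs _ hv h1
    rw [h2] at hsp
    exact (mul_eq_left.1 hsp.symm)

theorem SR.dd_iter (h : SR κ) (hG : IsPGroup p G) {y : G} (hy : DD p κ y) (i : ℕ)
    (hyp : y ^ p ^ i ≠ 1) : DD p κ (y ^ p ^ i) := by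
  induction i with
  | zero => simpa using hy
  | succ i ih =>
    have h1 : y ^ p ^ i ≠ 1 := by
      intro h0; apply hyp; rw [pow_succ, pow_mul, h0, one_pow]
    rw [pow_succ, pow_mul] at hyp ⊢
    exact h.dd_step hG (ih h1) hyp

/-- Main combination: class of `x ∉ K` not `K`-invariant yields a subgroup `R < K` and
`D` modulo `R`. -/
theorem SR.main_dd (h : SR κ) (hp3 : 3 ≤ p) (hG : IsPGroup p G) {K : Subgroup G}
    (hK : ASet κ (K : Set G)) {x : G} (hx : x ∉ K) :
    (∀ k ∈ K, κ (x * k) = κ x) ∨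
    ∃ R : Subgroup G, ASet κ (R : Set G) ∧ R ≤ K ∧ R ≠ K ∧ ∃ x', κ x' = κ x ∧
      ∀ w ∈ Subgroup.zpowers ((x' : G ⧸ R) ^ p), kq κ R ((x' : G ⧸ R) * w) = kq κ R x' →
        w = 1 := by
  obtain ⟨x', hx', hT⟩ := exists_max (κ := κ) hG x
  have hx'K : x' ∉ K := fun hc => hx (hK _ _ hx' hc)
  by_cases hKR : K ≤ rad κ x'
  · left
    intro k hk
    rw [mul_comm, ← hx']
    exact hKR hk x hx'.symm
  right
  have hR := h.rad_aset x'
  have hRK : rad κ x' ≤ K := (sub_total hG K _).resolve_left hKR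
  refine ⟨rad κ x', hR, hRK, fun he => hKR he.ge, x', hx', ?_⟩
  set R := rad κ x' with hRd
  have hcls : ∀ z : G, kq κ R (z : G ⧸ R) = kq κ R (x' : G ⧸ R) → κ z = κ x' := by
    intro z hz
    obtain ⟨u, hu, hux⟩ := kq_exists hz.symm
    have h1 : u⁻¹ * z ∈ R := QuotientGroup.eq.1 hux
    have := mem_rad.1 h1 u hu
    rwa [mul_comm, mul_inv_cancel_left] at this
  obtain ⟨q, hqK, hqR⟩ := SetLike.not_le_iff_exists.1 hKR
  have hKQ : ASet (kq κ R) ((K.map (QuotientGroup.mk' R) : Subgroup (G ⧸ R)) : Set (G ⧸ R)) := by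
    intro a b hab ha
    obtain ⟨k, hk, rfl⟩ := ha
    induction b using QuotientGroup.induction_on with | H z
    obtain ⟨u, hu, huz⟩ := kq_exists hab
    exact ⟨u, hK _ _ hu.symm hk, huz⟩
  refine (h.quot hR).key hp3 (hG.to_quotient R) (x := (x' : G ⧸ R)) ?_ ?_ hKQ
    (q := (q : G ⧸ R)) ⟨q, hqK, rfl⟩ ?_ ?_
  · intro t ht
    induction t using QuotientGroup.induction_on with | H z
    obtain ⟨a, ha⟩ := (mem_zp_iff _ _).1 (hT z ((hcls z ht).trans hx'))
    rw [mem_zp_iff]; exact ⟨a, by rw [← ha]; rfl⟩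
  · intro g hg
    induction g using QuotientGroup.induction_on with | H z
    rw [QuotientGroup.eq_one_iff]
    intro t ht
    exact hcls _ (hg t (h.kq_eq hR ht))
  · rwa [Ne, QuotientGroup.eq_one_iff]
  · rintro ⟨k, hk, hkx⟩
    have : k⁻¹ * x' ∈ R := QuotientGroup.eq.1 hkx
    have h2 := K.mul_mem hk (hRK this)
    rw [mul_inv_cancel_left] at h2
    exact hx'K h2

theorem SR.main (h : SR κ) (hp3 : 3 ≤ p) (hG : IsPGroup p G) {L K U : Subgroup G}
    (hLK : L ≤ K) (hKU : K ≤ U) (hLK' : K ≠ L) (hKU' : K ≠ U)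
    (hK : ASet κ (K : Set G)) (hU : ASet κ (U : Set G))
    (hw : ∀ x ∈ U, x ∉ K → ∀ k ∈ K, ∃ l ∈ L, κ (x * k * l) = κ x) :
    ∀ x, x ∉ K → ∀ k ∈ K, κ (x * k) = κ x := by
  have inK : ∀ (R : Subgroup G) (x k : G), x ∉ K → k ∈ K →
      (k : G ⧸ R) ∈ Subgroup.zpowers ((x : G ⧸ R) ^ p) := by
    intro R x k hx hk
    obtain ⟨a, ha⟩ := (mem_zp_iff _ _).1 (mem_zp_p hG hx hk)
    rw [mem_zp_iff]; exact ⟨a, by rw [← ha]; rfl⟩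
  have st1 : ∀ x ∈ U, x ∉ K → ∀ k ∈ K, κ (x * k) = κ x := by
    intro x hxU hx
    rcases h.main_dd hp3 hG hK hx with h1 | ⟨R, hR, hRK, hRK', x', hx', hD⟩
    · exact h1
    exfalso
    have hx'K : x' ∉ K := fun hc => hx (hK _ _ hx' hc)
    have hx'U : x' ∈ U := hU _ _ hx'.symm hxU
    have hmem : ∀ k ∈ K, ∃ l ∈ L, k * l ∈ R := by
      intro k hk
      obtain ⟨l, hl, hkl⟩ := hw x' hx'U hx'K k hk
      refine ⟨l, hl, ?_⟩
      rw [← QuotientGroup.eq_one_iff]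
      apply hD _ (inK R x' _ hx'K (K.mul_mem hk (hLK hl)))
      rw [← QuotientGroup.mk_mul, ← mul_assoc]
      exact h.kq_eq hR hkl
    rcases sub_total hG L R with hLR | hRL
    · apply hRK'
      refine le_antisymm hRK fun k hk => ?_
      obtain ⟨l, hl, hkl⟩ := hmem k hk
      exact (R.mul_mem_cancel_right (hLR hl)).1 hkl
    · apply hLK'
      refine le_antisymm (fun k hk => ?_) hLK
      obtain ⟨l, hl, hkl⟩ := hmem k hk
      exact (L.mul_mem_cancel_right hl).1 (hRL hkl)
  intro x hx
  by_cases hxU : x ∈ U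
  · exact st1 x hxU hx
  rcases h.main_dd hp3 hG hK hx with h1 | ⟨R, hR, hRK, hRK', x', hx', hD⟩
  · exact h1
  exfalso
  have hx'U : x' ∉ U := fun hc => hxU (hU _ _ hx' hc)
  obtain ⟨u, huU, huK⟩ := SetLike.not_le_iff_exists.1 (fun hc => hKU' (le_antisymm hKU hc))
  obtain ⟨i, hi⟩ := exists_pp hG (mem_of_not_mem hG hx'U huU)
  set v := x' ^ p ^ i with hv
  have hvU : v ∈ U := Subgroup.zpowers_le.2 huU (hi ▸ Subgroup.mem_zpowers v)
  have hvK : v ∉ K := fun hc => huK (Subgroup.zpowers_le.2 hc (hi ▸ Subgroup.mem_zpowers u))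
  have hd0 : DD p (kq κ R) (x' : G ⧸ R) :=
    ⟨{t | kq κ R t = kq κ R x'}, ASet.cls _, rfl, hD⟩
  have hd := (h.quot hR).dd_iter (hG.to_quotient R) hd0 i (by
    intro hc
    have : (v : G ⧸ R) = 1 := hc
    exact hvK (hRK ((QuotientGroup.eq_one_iff v).1 this)))
  obtain ⟨S, hS, hvS, hu⟩ := (show DD p (kq κ R) (v : G ⧸ R) from hd)
  apply hRK'
  refine le_antisymm hRK fun k hk => ?_
  rw [← QuotientGroup.eq_one_iff]
  refine hu _ (inK R v k hvK hk) ?_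
  rw [← QuotientGroup.mk_mul]
  exact hS _ _ (h.kq_eq hR (st1 v hvU hvK k hk).symm) hvS

end sr2
end CircAux

open CohCfg in
/-- Lemma: let `p ≥ 3` be a prime, `X` a circulant scheme on a cyclic group of
order `p^n`, and `𝔖 = U/L ∈ 𝔖₀(X)`.  If `X_𝔖` is a nontrivial wreath product
(i.e. satisfies the `e(K/L)/e(K/L)`-condition for some `X_𝔖`-group `K/L` with
`L < K < U`), then `X` is a nontrivial wreath product. -/
theorem stmt_19 {G : Type u} [CommGroup G] [IsCyclic G] [Fintype G]
    (p n : ℕ) (hp : p.Prime) (hp3 : 3 ≤ p) (hcard : Fintype.card G = p ^ n)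
    (X : CohCfg G) (hs : IsScheme X) (hc : IsCirculant X)
    (U L : Subgroup G) (hLU : L ≤ U) (hU : IsXGroup X U) (hL : IsXGroup X L)
    (Y : CohCfg (Sec (U : Set G) (eRelSet L)))
    (hY : IsSectionCfg X (U : Set G) (eRelSet L) Y)
    -- X_𝔖 is a nontrivial wreath product
    (hwr : ∃ K : Subgroup G, L ≤ K ∧ K ≤ U ∧ K ≠ L ∧ K ≠ U ∧
       IsParabolic Y (secRel (U : Set G) (eRelSet L) (eRelSet K)) ∧
       WedgeCond Y (secRel (U : Set G) (eRelSet L) (eRelSet K))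
                   (secRel (U : Set G) (eRelSet L) (eRelSet K))) :
    ∃ K : Subgroup G, IsXGroup X K ∧ K ≠ ⊥ ∧ K ≠ ⊤ ∧
      WedgeCond X (eRelSet K) (eRelSet K) := by
  obtain ⟨K, hLK, hKU, hKL', hKU', hKP, hKW⟩ := hwr
  haveI : Fact p.Prime := ⟨hp⟩
  have hG : IsPGroup p G := IsPGroup.iff_card.2 ⟨n, by rw [Nat.card_eq_fintype_card, hcard]⟩
  -- class map
  choose cl hclS hcl using X.cover
  have huniq : ∀ s ∈ X.S, ∀ q ∈ s, cl q = s := by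
    intro s hs q hq
    by_contra hne
    have := X.disj _ (hclS q) s hs hne
    exact (Set.eq_empty_iff_forall_notMem.1 this) q ⟨hcl q, hq⟩
  have htr : ∀ s ∈ X.S, ∀ (a b g : G), (a, b) ∈ s → (a * g, b * g) ∈ s := by
    intro s hs a b g hab
    rw [← hc g s hs]
    exact ⟨(a, b), hab, rfl⟩
  set κ : G → Set (G × G) := fun x => cl (1, x) with hκ
  have hmem : ∀ s ∈ X.S, ∀ a b : G, (a, b) ∈ s ↔ κ (a⁻¹ * b) = s := by
    intro s hs a b
    constructor
    · intro h
      apply huniq s hs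
      have := htr s hs a b a⁻¹ h
      rwa [mul_inv_cancel, mul_comm b] at this
    · intro h
      have h1 : ((1 : G), a⁻¹ * b) ∈ s := h ▸ hcl (1, a⁻¹ * b)
      have := htr s hs _ _ a h1
      rwa [one_mul, mul_comm, mul_inv_cancel_left] at this
  have hκS : ∀ x, κ x ∈ X.S := fun x => hclS _
  have hSR : CircAux.SR κ := by
    refine ⟨?_, ?_, ?_⟩
    · intro x hx
      have h1 : ((1 : G), x) ∈ κ 1 := hx ▸ hcl (1, x)
      exact (X.diag _ (hκS 1) ⟨(1, 1), hcl (1, 1), rfl⟩ _ h1).symm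
    · intro x y hxy
      have hS := X.conv _ (hκS x)
      have e : ∀ z, κ z = κ x → κ z⁻¹ = {q : G × G | (q.2, q.1) ∈ κ x} := by
        intro z hz
        apply huniq _ hS
        show (z⁻¹, (1 : G)) ∈ κ x
        rw [hmem _ (hκS x)]; simpa using hz
      rw [e x rfl, e y hxy.symm]
    · intro x y hxy a b
      by_cases ha : a ∈ X.S
      swap
      · have e : ∀ x, IsEmpty {g // κ g = a ∧ κ (g⁻¹ * x) = b} :=
          fun x => ⟨fun g => ha (g.2.1 ▸ hκS _)⟩
        have := e x; have := e y
        rw [Nat.card_of_isEmpty, Nat.card_of_isEmpty]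
      by_cases hb : b ∈ X.S
      swap
      · have e : ∀ x, IsEmpty {g // κ g = a ∧ κ (g⁻¹ * x) = b} :=
          fun x => ⟨fun g => hb (g.2.2 ▸ hκS _)⟩
        have := e x; have := e y
        rw [Nat.card_of_isEmpty, Nat.card_of_isEmpty]
      have h1 := X.inum a ha b hb _ (hκS x) (1, x) (hcl _) (1, y) (hxy ▸ hcl (1, y))
      have e : ∀ x, {γ : G | ((1 : G), γ) ∈ a ∧ (γ, x) ∈ b} =
          {g | κ g = a ∧ κ (g⁻¹ * x) = b} := by
        intro x; ext g
        simp only [Set.mem_setOf_eq]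
        rw [hmem a ha, hmem b hb]; simp
      simp only [e] at h1
      exact h1
  have hXA : ∀ H : Subgroup G, IsXGroup X H → CircAux.ASet κ (H : Set G) := by
    intro H hH x y hxy hx
    have h1 := hH.1 _ (hκS x) ⟨(1, x), hcl _, by simpa [eRelSet] using hx⟩
    have h2 : ((1 : G), y) ∈ κ x := hxy ▸ hcl (1, y)
    simpa [eRelSet] using h1 h2
  have hUA := hXA U hU
  -- points of the section
  have secOf : ∀ x ∈ U, ∃ Γ : Sec (U : Set G) (eRelSet L), ∀ y, y ∈ Γ.1 ↔ x⁻¹ * y ∈ L :=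
    fun x hx => ⟨⟨_, x, hx, rfl⟩, fun y => Iff.rfl⟩
  obtain ⟨Γ1, hΓ1⟩ := secOf 1 U.one_mem
  -- e(K) in the section
  have hsK : ∀ (Γ : Sec (U : Set G) (eRelSet L)) (x : G), (∀ y, y ∈ Γ.1 ↔ x⁻¹ * y ∈ L) →
      ((Γ1, Γ) ∈ secRel (U : Set G) (eRelSet L) (eRelSet K) ↔ x ∈ K) := by
    intro Γ x hx
    constructor
    · rintro ⟨a, ha, b, hb, hab⟩
      have ha' : a ∈ K := hLK (by simpa using (hΓ1 a).1 ha)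
      have hb' : x⁻¹ * b ∈ K := hLK ((hx b).1 hb)
      have h2 : b ∈ K := by
        have := K.mul_mem ha' (show a⁻¹ * b ∈ K from hab)
        simpa using this
      have := K.mul_mem h2 (K.inv_mem hb')
      simpa using this
    · intro hxK
      exact ⟨1, (hΓ1 1).2 (by simp [L.one_mem]), x, (hx x).2 (by simp [L.one_mem]),
        by simpa [eRelSet] using hxK⟩
  have hmemY : ∀ x ∈ U, ∀ (Γ : Sec (U : Set G) (eRelSet L)), (∀ y, y ∈ Γ.1 ↔ x⁻¹ * y ∈ L) →
      secRel (U : Set G) (eRelSet L) (κ x) ∈ Y.S ∧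
        (Γ1, Γ) ∈ secRel (U : Set G) (eRelSet L) (κ x) := by
    intro x hx Γ hΓ
    have h1 : (Γ1, Γ) ∈ secRel (U : Set G) (eRelSet L) (κ x) :=
      ⟨1, (hΓ1 1).2 (by simp [L.one_mem]), x, (hΓ x).2 (by simp [L.one_mem]), hcl _⟩
    refine ⟨?_, h1⟩
    rw [hY]
    exact ⟨κ x, hκS x, rfl, ⟨_, h1⟩⟩
  have hKA : CircAux.ASet κ (K : Set G) := by
    intro x y hxy hx
    have hxU := hKU hx
    have hyU := hUA _ _ hxy hxU
    obtain ⟨Γx, hΓx⟩ := secOf x hxU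
    obtain ⟨Γy, hΓy⟩ := secOf y hyU
    have h1 := hmemY x hxU Γx hΓx
    have h2 := hmemY y hyU Γy hΓy
    rw [← hxy] at h2
    have h3 := hKP.1 _ h1.1 ⟨_, h1.2, (hsK Γx x hΓx).2 hx⟩ h2.2
    exact (hsK Γy y hΓy).1 h3
  have hw : ∀ x ∈ U, x ∉ K → ∀ k ∈ K, ∃ l ∈ L, κ (x * k * l) = κ x := by
    intro x hxU hxK k hk
    have hxkU : x * k ∈ U := U.mul_mem hxU (hKU hk)
    obtain ⟨Γx, hΓx⟩ := secOf x hxU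
    obtain ⟨Γk, hΓk⟩ := secOf (x * k) hxkU
    have h1 := hmemY x hxU Γx hΓx
    have hdis : secRel (U : Set G) (eRelSet L) (κ x) ∩
        secRel (U : Set G) (eRelSet L) (eRelSet K) = ∅ := by
      rw [Set.eq_empty_iff_forall_notMem]
      intro q hq
      exact hxK ((hsK Γx x hΓx).1 (hKP.1 _ h1.1 ⟨q, hq⟩ h1.2))
    have h2 := hKW _ h1.1 hdis _ h1.2 Γ1 Γk (hKP.2.1 Γ1)
      ⟨x, (hΓx x).2 (by simp [L.one_mem]), x * k, (hΓk _).2 (by simp [L.one_mem]),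
        by simpa [eRelSet] using hk⟩
    obtain ⟨a, ha, b, hb, hab⟩ := h2
    have haL : a ∈ L := by simpa using (hΓ1 a).1 ha
    have hbL := (hΓk b).1 hb
    refine ⟨(x * k)⁻¹ * b * a⁻¹, L.mul_mem hbL (L.inv_mem haL), ?_⟩
    have h3 := (hmem _ (hκS x) a b).1 hab
    rw [← h3]
    congr 1
    rw [← mul_assoc, mul_inv_cancel_left, mul_comm]
  have hmain := hSR.main hp3 hG hLK hKU hKL' hKU' hKA hUA hw
  refine ⟨K, ⟨?_, ?_, ?_, ?_⟩, ?_, ?_, ?_⟩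
  · rintro t ht ⟨⟨a, b⟩, hab, habK⟩ ⟨c, d⟩ hcd
    rw [hmem t ht] at hab hcd
    exact hKA _ _ (hab.trans hcd.symm) habK
  · intro a; simp [eRelSet, K.one_mem]
  · intro q hq
    have := K.inv_mem (show q.1⁻¹ * q.2 ∈ K from hq)
    simpa [eRelSet] using this
  · intro a b c hab hbc
    have := K.mul_mem (show a⁻¹ * b ∈ K from hab) (show b⁻¹ * c ∈ K from hbc)
    show a⁻¹ * c ∈ K
    simpa [mul_assoc] using this
  · rintro rfl; exact hKL' (le_bot_iff.1 hLK).symm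
  · rintro rfl; exact hKU' (top_le_iff.1 hKU).symm
  · rintro s hs hdis ⟨c, d⟩ hcd a b hca hdb
    have hx : c⁻¹ * d ∉ K := fun hk =>
      (Set.eq_empty_iff_forall_notMem.1 hdis) (c, d) ⟨hcd, hk⟩
    have hca' : c⁻¹ * a ∈ K := hca
    have hdb' : d⁻¹ * b ∈ K := hdb
    have h1 := hmain _ hx ((c⁻¹ * a)⁻¹ * (d⁻¹ * b)) (K.mul_mem (K.inv_mem hca') hdb')
    rw [hmem s hs] at hcd ⊢
    rw [← hcd, ← h1]
    congr 1
    rw [mul_inv, inv_inv]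
    calc a⁻¹ * b = (c⁻¹ * c) * (d * d⁻¹) * (a⁻¹ * b) := by simp
      _ = _ := by ac_rfl
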